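/- arXiv:2407.04962 — 2 statements merged into one kernel-verified Lean document; each statement's English description precedes it below -/
import Mathlib

section
/- Let (Ω, μ) be a probability space, T : Ω → Ω an ergodic measure-preserving transformation, and {J_ω} the associated ergodic family of Jacobi operators with almost-sure spectrum Σ, Lyapunov exponent L, and A = lim_{n→∞}(a_1(ω)⋯a_n(ω))^{1/n} for μ-a.e. ω. Then the Lebesgue measure of the spectrum satisfies |Σ| ≤ 4·A·exp( sup_{E ∈ Σ} |L(E)| ). -/
open MeasureTheory Filter
open scoped ENNReal NNReal

noncomputable section

attribute [local instance] Matrix.normedAddCommGroup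

/-- The Hilbert space `ℓ²(ℕ)` (with complex scalars). -/
abbrev ellTwo : Type := lp (fun _ : ℕ => ℂ) 2

/-- The off-diagonal Jacobi coefficients of the ergodic family generated by the sampling
function `f` and the transformation `T`: `a_n(ω) = f(Tⁿ ω)` for `n ≥ 1`, and `a_0(ω) = 0`. -/
def jacobiA {Ω : Type*} (f : Ω → ℝ) (T : Ω → Ω) : ℕ → Ω → ℝ
  | 0, _ => 0
  | n + 1, ω => f (T^[n + 1] ω)

/-- The diagonal Jacobi coefficients of the ergodic family generated by the sampling
function `g` and the transformation `T`: `b_n(ω) = g(Tⁿ ω)` for `n ≥ 1`. -/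
def jacobiB {Ω : Type*} (g : Ω → ℝ) (T : Ω → Ω) (n : ℕ) (ω : Ω) : ℝ := g (T^[n] ω)

/-- `IsJacobiOp a b J` says that the bounded operator `J` on `ℓ²(ℕ)` acts as the Jacobi
matrix with off-diagonal coefficients `a` and diagonal coefficients `b`:
`(J ψ)_n = a_{n-1} ψ_{n-1} + b_n ψ_n + a_n ψ_{n+1}` for `n ≥ 1` (sites are indexed from `1`,
so that the `k`-th coordinate of `ℓ²(ℕ)`, `k = 0, 1, 2, …`, holds `ψ_{k+1}`; the convention
`a_0 = 0` renders the term `a_0 ψ_0` absent). -/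
def IsJacobiOp (a b : ℕ → ℝ) (J : ellTwo →L[ℂ] ellTwo) : Prop :=
  ∀ ψ : ellTwo, ∀ k : ℕ,
    (J ψ) k = (a k : ℂ) * (if k = 0 then 0 else ψ (k - 1)) + (b (k + 1) : ℂ) * ψ k
      + (a (k + 1) : ℂ) * ψ (k + 1)

/-- The one-step transfer matrix of the ergodic Jacobi family at energy `z` and site `n ≥ 1`:
`A_z at site n = (1 / a_n(ω)) · [[z - b_n(ω), -a_{n-1}(ω)], [a_n(ω), 0]]`. -/
def transferMatrix {Ω : Type*} (f g : Ω → ℝ) (T : Ω → Ω) (z : ℂ) (n : ℕ) (ω : Ω) :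
    Matrix (Fin 2) (Fin 2) ℂ :=
  ((jacobiA f T n ω : ℝ) : ℂ)⁻¹ •
    Matrix.of ![![z - (jacobiB g T n ω : ℂ), -((jacobiA f T (n - 1) ω : ℝ) : ℂ)],
                ![((jacobiA f T n ω : ℝ) : ℂ), 0]]

/-- The transfer matrix cocycle `A_z^n(ω) = A_z(T^{n-1}ω) ⋯ A_z(Tω) A_z(ω)`, i.e. the
product of the one-step transfer matrices at sites `n, n-1, …, 1`. -/
def transferCocycle {Ω : Type*} (f g : Ω → ℝ) (T : Ω → Ω) (z : ℂ) (ω : Ω) :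
    ℕ → Matrix (Fin 2) (Fin 2) ℂ
  | 0 => 1
  | n + 1 => transferMatrix f g T z (n + 1) ω * transferCocycle f g T z ω n

open Polynomial in
lemma sum_inv_node_prod (n : ℕ) :
    ∑ i ∈ Finset.range (n + 1), |∏ j ∈ (Finset.range (n + 1)).erase i,
      (Chebyshev.node n i - Chebyshev.node n j)|⁻¹ = 2 ^ (n - 1) := by
  have hdeg : (Chebyshev.T ℝ n).degree < (Finset.range (n + 1)).card := by
    rw [Finset.card_range, Chebyshev.degree_T]
    norm_cast
    simp
  have h := Lagrange.coeff_eq_sum (Chebyshev.strictAntiOn_node n).injOn hdeg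
  have h2 : (Chebyshev.T ℝ n).coeff ((Finset.range (n + 1)).card - 1) = 2 ^ (n - 1) := by
    trans (Chebyshev.T ℝ n).leadingCoeff
    · simp [leadingCoeff]
    · simp
  rw [← h2, h]
  refine Finset.sum_congr rfl fun i hi => ?_
  have hi' : i ≤ n := by simpa [Nat.lt_succ_iff] using hi
  have hpos := Chebyshev.zero_lt_prod_node_sub_node hi'
  have he := Chebyshev.eval_T_real_node (Finset.mem_Iic.mpr hi')
  rw [he]
  generalize (∏ j ∈ (Finset.range (n + 1)).erase i,
      (Chebyshev.node n i - Chebyshev.node n j)) = Q at hpos ⊢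
  rcases neg_one_pow_eq_or ℝ i with h1 | h1 <;> rw [h1] at hpos ⊢
  · rw [abs_of_pos (by linarith)]; simp
  · rw [abs_of_neg (by linarith), inv_neg]; simp [neg_div]

/-- The distribution function of a compact set attains every value on the set itself. -/
lemma exists_point_of_compact (K : Set ℝ) (hK : IsCompact K) (hne : K.Nonempty) (y : ℝ)
    (hy0 : 0 ≤ y) (hy1 : y ≤ volume.real K) : ∃ x ∈ K, volume.real (K ∩ Set.Iic x) = y := by
  have hfin : volume K ≠ ⊤ := hK.measure_lt_top.ne
  obtain ⟨m, hm⟩ := hK.exists_isLeast hne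
  obtain ⟨M, hM⟩ := hK.exists_isGreatest hne
  have hlip : ∀ x z : ℝ, x ≤ z → volume.real (K ∩ Set.Iic z) ≤
      volume.real (K ∩ Set.Iic x) + (z - x) := by
    intro x z hxz
    have hsub : K ∩ Set.Iic z ⊆ (K ∩ Set.Iic x) ∪ Set.Ioc x z := by
      intro t ht
      by_cases h : t ≤ x
      · exact Or.inl ⟨ht.1, h⟩
      · exact Or.inr ⟨not_le.mp h, ht.2⟩
    have hf1 : volume (K ∩ Set.Iic x) ≠ ⊤ := measure_ne_top_of_subset Set.inter_subset_left hfin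
    calc volume.real (K ∩ Set.Iic z) ≤ volume.real ((K ∩ Set.Iic x) ∪ Set.Ioc x z) :=
          measureReal_mono hsub (by
            refine (measure_union_lt_top hf1.lt_top ?_).ne
            simp)
      _ ≤ volume.real (K ∩ Set.Iic x) + volume.real (Set.Ioc x z) := measureReal_union_le _ _
      _ = _ := by rw [Real.volume_real_Ioc_of_le hxz]
  have hmono : ∀ x z : ℝ, x ≤ z → volume.real (K ∩ Set.Iic x) ≤ volume.real (K ∩ Set.Iic z) := by
    intro x z hxz
    exact measureReal_mono (Set.inter_subset_inter_right _ (Set.Iic_subset_Iic.mpr hxz))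
      (measure_ne_top_of_subset Set.inter_subset_left hfin)
  have hcont : Continuous fun x : ℝ => volume.real (K ∩ Set.Iic x) := by
    refine LipschitzWith.continuous (K := 1) (LipschitzWith.of_dist_le_mul fun x z => ?_)
    rw [NNReal.coe_one, one_mul, Real.dist_eq, Real.dist_eq, abs_le]
    rcases le_total x z with h | h
    · have h1 := hlip _ _ h
      have h2 := hmono _ _ h
      rw [abs_of_nonpos (by linarith)]
      constructor <;> linarith
    · have h1 := hlip _ _ h
      have h2 := hmono _ _ h
      rw [abs_of_nonneg (by linarith)]
      constructor <;> linarith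
  have hmM : m ≤ M := hm.2 hM.1
  have hφm : volume.real (K ∩ Set.Iic m) = 0 := by
    have : K ∩ Set.Iic m ⊆ {m} := fun t ht => le_antisymm ht.2 (hm.2 ht.1)
    rw [measureReal_def, measure_mono_null this (by simp)]
    rfl
  have hφM : volume.real (K ∩ Set.Iic M) = volume.real K := by
    rw [Set.inter_eq_left.mpr (show K ⊆ Set.Iic M from fun t ht => hM.2 ht)]
  obtain ⟨x, hx, hxy⟩ := intermediate_value_Icc hmM hcont.continuousOn
    (show y ∈ Set.Icc _ _ from ⟨by simpa [hφm] using hy0, by simpa [hφM] using hy1⟩)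
  obtain ⟨x', hx'⟩ := (hK.inter_right (isClosed_Iic (a := x))).exists_isGreatest ⟨m, hm.1, hx.1⟩
  refine ⟨x', hx'.1.1, ?_⟩
  rw [← hxy]
  change _ = volume.real (K ∩ Set.Iic x)
  congr 1
  ext t
  constructor
  · rintro ⟨h1, h2⟩
    exact ⟨h1, Set.mem_Iic.mpr (le_trans (Set.mem_Iic.mp h2) (Set.mem_Iic.mp hx'.1.2))⟩
  · rintro ⟨h1, h2⟩
    exact ⟨h1, hx'.2 ⟨h1, h2⟩⟩

lemma dist_fun_sub_le (K : Set ℝ) (hK : IsCompact K) (x z : ℝ) :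
    |volume.real (K ∩ Set.Iic x) - volume.real (K ∩ Set.Iic z)| ≤ |x - z| := by
  have hfin : volume K ≠ ⊤ := hK.measure_lt_top.ne
  wlog h : x ≤ z generalizing x z
  · rw [abs_sub_comm, abs_sub_comm x z]
    exact this z x (le_of_not_ge h)
  have hsub : K ∩ Set.Iic z ⊆ (K ∩ Set.Iic x) ∪ Set.Ioc x z := by
    intro t ht
    by_cases h : t ≤ x
    · exact Or.inl ⟨ht.1, h⟩
    · exact Or.inr ⟨not_le.mp h, ht.2⟩
  have hf1 : volume (K ∩ Set.Iic x) ≠ ⊤ := measure_ne_top_of_subset Set.inter_subset_left hfin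
  have h1 : volume.real (K ∩ Set.Iic z) ≤ volume.real (K ∩ Set.Iic x) + (z - x) := by
    calc volume.real (K ∩ Set.Iic z) ≤ volume.real ((K ∩ Set.Iic x) ∪ Set.Ioc x z) :=
          measureReal_mono hsub (by
            refine (measure_union_lt_top hf1.lt_top ?_).ne
            simp)
      _ ≤ volume.real (K ∩ Set.Iic x) + volume.real (Set.Ioc x z) := measureReal_union_le _ _
      _ = _ := by rw [Real.volume_real_Ioc_of_le h]
  have h2 : volume.real (K ∩ Set.Iic x) ≤ volume.real (K ∩ Set.Iic z) :=
    measureReal_mono (Set.inter_subset_inter_right _ (Set.Iic_subset_Iic.mpr h))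
      (measure_ne_top_of_subset Set.inter_subset_left hfin)
  rw [abs_of_nonpos (by linarith), abs_of_nonpos (by linarith)]
  linarith

/-- Pólya's inequality (in a slightly weakened form). -/
lemma polya_ineq (K : Set ℝ) (hK : IsCompact K) (P : Polynomial ℝ) (hP : P.Monic) (n : ℕ)
    (hn : P.natDegree = n) (hn0 : n ≠ 0) (c : ℝ) (hc : 0 ≤ c)
    (hb : ∀ x ∈ K, |P.eval x| ≤ c ^ n) : volume.real K ≤ 4 * c := by
  rcases K.eq_empty_or_nonempty with rfl | hne
  · simp; positivity
  set l := volume.real K with hl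
  have hl0 : 0 ≤ l := measureReal_nonneg
  rcases hl0.eq_or_lt with h0 | hlpos
  · rw [← h0]; positivity
  have hex : ∀ i : ℕ, ∃ x ∈ K,
      volume.real (K ∩ Set.Iic x) = l / 2 * (1 + Polynomial.Chebyshev.node n i) := by
    intro i
    have := Polynomial.Chebyshev.node_mem_Icc (n := n) (i := i)
    refine exists_point_of_compact K hK hne _ ?_ ?_
    · have := this.1
      exact mul_nonneg (by positivity) (by linarith)
    · have := this.2
      nlinarith
  choose x hxK hx using hex
  have hdist : ∀ i j, l / 2 * |Polynomial.Chebyshev.node n i - Polynomial.Chebyshev.node n j| ≤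
      |x i - x j| := by
    intro i j
    have := dist_fun_sub_le K hK (x i) (x j)
    rw [hx, hx, ← mul_sub, abs_mul, abs_of_pos (by positivity : 0 < l / 2)] at this
    rwa [add_sub_add_left_eq_sub] at this
  have hinjn := (Polynomial.Chebyshev.strictAntiOn_node n).injOn
  have hinj : Set.InjOn x (Finset.range (n + 1)) := by
    intro i hi j hj hij
    apply hinjn hi hj
    have := hdist i j
    rw [hij, sub_self, abs_zero] at this
    have h2 : |Polynomial.Chebyshev.node n i - Polynomial.Chebyshev.node n j| ≤ 0 := by
      by_contra hcon
      push Not at hcon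
      have : 0 < l / 2 * |Polynomial.Chebyshev.node n i - Polynomial.Chebyshev.node n j| := by
        positivity
      linarith
    exact sub_eq_zero.mp (abs_nonpos_iff.mp h2)
  have hdeg : P.degree < (Finset.range (n + 1)).card := by
    rw [Finset.card_range, Polynomial.degree_eq_natDegree hP.ne_zero, hn]
    norm_cast
    simp
  have hcoef := Lagrange.coeff_eq_sum hinj hdeg
  have hone : P.coeff ((Finset.range (n + 1)).card - 1) = 1 := by
    have := hP.coeff_natDegree
    rw [hn] at this
    simpa using this
  rw [hone] at hcoef
  have key : (1 : ℝ) ≤ c ^ n * (((l / 2) ^ n)⁻¹ * 2 ^ (n - 1)) := by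
    rw [← sum_inv_node_prod n, Finset.mul_sum, Finset.mul_sum]
    calc (1 : ℝ) = |∑ i ∈ Finset.range (n + 1), P.eval (x i) /
            ∏ j ∈ (Finset.range (n + 1)).erase i, (x i - x j)| := by rw [← hcoef]; simp
      _ ≤ ∑ i ∈ Finset.range (n + 1), |P.eval (x i) /
            ∏ j ∈ (Finset.range (n + 1)).erase i, (x i - x j)| := Finset.abs_sum_le_sum_abs _ _
      _ ≤ _ := by
        refine Finset.sum_le_sum fun i hi => ?_
        rw [abs_div, div_eq_mul_inv, ← mul_inv]
        refine mul_le_mul (hb _ (hxK i)) ?_ (by positivity) (by positivity)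
        have hcard : ((Finset.range (n + 1)).erase i).card = n := by
          rw [Finset.card_erase_of_mem hi]; simp
        have hpos : 0 < |∏ j ∈ (Finset.range (n + 1)).erase i,
            (Polynomial.Chebyshev.node n i - Polynomial.Chebyshev.node n j)| := by
          rw [abs_pos, Finset.prod_ne_zero_iff]
          intro j hj
          rw [sub_ne_zero]
          intro h
          exact (Finset.mem_erase.mp hj).1 (hinjn hi (Finset.mem_erase.mp hj).2 h).symm
        refine inv_anti₀ (by positivity) ?_
        have hpw : (l / 2) ^ n = ∏ _j ∈ (Finset.range (n + 1)).erase i, l / 2 := by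
          rw [Finset.prod_const, hcard]
        rw [Finset.abs_prod, Finset.abs_prod, hpw, ← Finset.prod_mul_distrib]
        exact Finset.prod_le_prod (fun j _ => by positivity) fun j _ => hdist i j
  have h2 : (l / 2) ^ n ≤ (2 * c) ^ n := by
    have h3 : (l / 2) ^ n ≤ c ^ n * 2 ^ (n - 1) := by
      have hp : 0 < (l / 2) ^ n := by positivity
      calc (l / 2) ^ n = (l / 2) ^ n * 1 := (mul_one _).symm
        _ ≤ (l / 2) ^ n * (c ^ n * (((l / 2) ^ n)⁻¹ * 2 ^ (n - 1))) := by gcongr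
        _ = _ := by field_simp
    calc (l / 2) ^ n ≤ c ^ n * 2 ^ (n - 1) := h3
      _ ≤ c ^ n * 2 ^ n := by
        gcongr
        · norm_num
        · omega
      _ = (2 * c) ^ n := by rw [mul_pow]; ring
  have := le_of_pow_le_pow_left₀ hn0 (by positivity) h2
  linarith

/-- Monic orthogonal polynomials. -/
def jacPoly (a b : ℕ → ℝ) : ℕ → Polynomial ℝ
  | 0 => 1
  | 1 => Polynomial.X - Polynomial.C (b 1)
  | n + 2 => (Polynomial.X - Polynomial.C (b (n + 2))) * jacPoly a b (n + 1)
      - Polynomial.C (a (n + 1) ^ 2) * jacPoly a b n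

lemma jacPoly_monic (a b : ℕ → ℝ) (n : ℕ) :
    ((jacPoly a b n).Monic ∧ (jacPoly a b n).natDegree = n) ∧
    ((jacPoly a b (n + 1)).Monic ∧ (jacPoly a b (n + 1)).natDegree = n + 1) := by
  induction n with
  | zero =>
    refine ⟨⟨Polynomial.monic_one, by simp [jacPoly]⟩, ?_⟩
    simp only [jacPoly]
    exact ⟨Polynomial.monic_X_sub_C _, Polynomial.natDegree_X_sub_C _⟩
  | succ n ih =>
    refine ⟨ih.2, ?_⟩
    obtain ⟨⟨h1, h2⟩, h3, h4⟩ := ih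
    simp only [jacPoly]
    have hm : ((Polynomial.X - Polynomial.C (b (n + 2))) * jacPoly a b (n + 1)).Monic :=
      (Polynomial.monic_X_sub_C _).mul h3
    have hd : ((Polynomial.X - Polynomial.C (b (n + 2))) * jacPoly a b (n + 1)).natDegree
        = n + 2 := by
      rw [(Polynomial.monic_X_sub_C _).natDegree_mul h3, h4, Polynomial.natDegree_X_sub_C]
      ring
    have hlt : (Polynomial.C (a (n + 1) ^ 2) * jacPoly a b n).natDegree
        < ((Polynomial.X - Polynomial.C (b (n + 2))) * jacPoly a b (n + 1)).natDegree := by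
      have := Polynomial.natDegree_C_mul_le (a (n + 1) ^ 2) (jacPoly a b n)
      omega
    refine ⟨hm.sub_of_left (Polynomial.degree_lt_degree hlt), ?_⟩
    rw [Polynomial.natDegree_sub_eq_left_of_natDegree_lt hlt, hd]

lemma cocycle_entry {Ω : Type*} (f g : Ω → ℝ) (T : Ω → Ω) (ω : Ω) (hf : ∀ ω, 0 < f ω) (E : ℝ)
    (n : ℕ) :
    transferCocycle f g T (E : ℂ) ω n 0 0 = (((jacPoly (fun n => jacobiA f T n ω)
      (fun n => jacobiB g T n ω) n).eval E / ∏ i ∈ Finset.Icc 1 n, jacobiA f T i ω : ℝ) : ℂ) ∧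
    transferCocycle f g T (E : ℂ) ω (n + 1) 0 0 = (((jacPoly (fun n => jacobiA f T n ω)
      (fun n => jacobiB g T n ω) (n + 1)).eval E /
        ∏ i ∈ Finset.Icc 1 (n + 1), jacobiA f T i ω : ℝ) : ℂ) := by
  have hpos : ∀ n, (jacobiA f T (n + 1) ω : ℂ) ≠ 0 := fun n => by
    exact_mod_cast (hf _).ne'
  have hprod : ∀ n, ((∏ i ∈ Finset.Icc 1 n, jacobiA f T i ω : ℝ) : ℂ) ≠ 0 := fun n => by
    rw [Complex.ofReal_ne_zero, Finset.prod_ne_zero_iff]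
    intro i hi
    obtain ⟨k, rfl⟩ : ∃ k, i = k + 1 := ⟨i - 1, by have := (Finset.mem_Icc.mp hi).1; omega⟩
    exact_mod_cast hpos k
  induction n with
  | zero =>
    refine ⟨by simp [transferCocycle, jacPoly], ?_⟩
    simp [transferCocycle, jacPoly, transferMatrix]
    field_simp
  | succ n ih =>
    refine ⟨ih.2, ?_⟩
    have h10 : transferCocycle f g T (E : ℂ) ω (n + 1) 1 0 =
        transferCocycle f g T (E : ℂ) ω n 0 0 := by
      rw [transferCocycle, Matrix.mul_apply, Fin.sum_univ_two]
      simp [transferMatrix, hpos n]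
    have h00 : transferCocycle f g T (E : ℂ) ω (n + 2) 0 0 = (jacobiA f T (n + 2) ω : ℂ)⁻¹ *
        (((E : ℂ) - jacobiB g T (n + 2) ω) * transferCocycle f g T (E : ℂ) ω (n + 1) 0 0
          - jacobiA f T (n + 1) ω * transferCocycle f g T (E : ℂ) ω (n + 1) 1 0) := by
      rw [transferCocycle, Matrix.mul_apply, Fin.sum_univ_two]
      simp [transferMatrix]
      ring
    change transferCocycle f g T (E : ℂ) ω (n + 2) 0 0 = _
    rw [h00, h10, ih.1, ih.2]
    have p1 := hprod n
    have e1 := hpos n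
    have e2 := hpos (n + 1)
    have hP1 : ∏ i ∈ Finset.Icc 1 (n + 1), jacobiA f T i ω =
        (∏ i ∈ Finset.Icc 1 n, jacobiA f T i ω) * jacobiA f T (n + 1) ω :=
      Finset.prod_Icc_succ_top (by omega) _
    have hP2 : ∏ i ∈ Finset.Icc 1 (n + 1 + 1), jacobiA f T i ω =
        (∏ i ∈ Finset.Icc 1 (n + 1), jacobiA f T i ω) * jacobiA f T (n + 1 + 1) ω :=
      Finset.prod_Icc_succ_top (by omega) _
    rw [hP2, hP1]
    simp only [jacPoly, Polynomial.eval_sub, Polynomial.eval_mul, Polynomial.eval_X,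
      Polynomial.eval_C]
    generalize (∏ i ∈ Finset.Icc 1 n, jacobiA f T i ω) = Q at *
    generalize (jacPoly (fun n => jacobiA f T n ω) (fun n => jacobiB g T n ω) n).eval E = u
    generalize (jacPoly (fun n => jacobiA f T n ω) (fun n => jacobiB g T n ω) (n + 1)).eval E = v
    rw [show n + 1 + 1 = n + 2 from rfl] at *
    generalize jacobiA f T (n + 1) ω = a1 at *
    generalize jacobiA f T (n + 2) ω = a2 at *
    push_cast
    field_simp

lemma cocycle_norm_le {Ω : Type*} (f g : Ω → ℝ) (T : Ω → Ω) (ω : Ω) (ε M R : ℝ) (hε : 0 < ε)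
    (hfε : ∀ ω, ε ≤ f ω) (hfM : ∀ ω, |f ω| ≤ M) (hgM : ∀ ω, |g ω| ≤ M) (z : ℂ) (hz : ‖z‖ ≤ R)
    (n : ℕ) : ‖transferCocycle f g T z ω n‖ ≤ (2 * (ε⁻¹ * (R + M) + 1)) ^ n := by
  have hR : 0 ≤ R := (norm_nonneg z).trans hz
  have hM : 0 ≤ M := (abs_nonneg _).trans (hfM ω)
  have hB : 0 ≤ ε⁻¹ * (R + M) + 1 := by positivity
  have haM : ∀ k, |jacobiA f T k ω| ≤ M := by
    intro k
    cases k with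
    | zero => simpa [jacobiA] using hM
    | succ k => exact hfM _
  have hmat : ∀ k, ‖transferMatrix f g T z (k + 1) ω‖ ≤ ε⁻¹ * (R + M) + 1 := by
    intro k
    have hak : ε ≤ jacobiA f T (k + 1) ω := hfε _
    have hapos : 0 < jacobiA f T (k + 1) ω := hε.trans_le hak
    have hinv : ‖((jacobiA f T (k + 1) ω : ℝ) : ℂ)⁻¹‖ ≤ ε⁻¹ := by
      rw [norm_inv, Complex.norm_real, Real.norm_eq_abs, abs_of_pos hapos]
      exact inv_anti₀ hε hak
    have hanz : ((jacobiA f T (k + 1) ω : ℝ) : ℂ) ≠ 0 := by exact_mod_cast hapos.ne'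
    rw [Matrix.norm_le_iff hB]
    intro i j
    fin_cases i <;> fin_cases j
    · simp only [transferMatrix]
      simp only [Fin.zero_eta, Matrix.smul_apply, Matrix.of_apply, Matrix.cons_val_zero,
        smul_eq_mul, norm_mul]
      have : ‖z - (jacobiB g T (k + 1) ω : ℂ)‖ ≤ R + M := by
        refine (norm_sub_le _ _).trans (add_le_add hz ?_)
        rw [Complex.norm_real]
        exact hgM _
      have := mul_le_mul hinv this (norm_nonneg _) (by positivity)
      linarith
    · have : ‖-((jacobiA f T k ω : ℝ) : ℂ)‖ ≤ R + M := by
        rw [norm_neg, Complex.norm_real]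
        have := haM k
        rw [Real.norm_eq_abs]; linarith
      have := mul_le_mul hinv this (norm_nonneg _) (by positivity)
      simp [transferMatrix] at this ⊢
      linarith
    · simp [transferMatrix, hanz]
      positivity
    · simpa [transferMatrix] using hB
  induction n with
  | zero =>
    rw [Matrix.norm_le_iff (by simp)]
    intro i j
    fin_cases i <;> fin_cases j <;> simp [transferCocycle]
  | succ n ih =>
    rw [Matrix.norm_le_iff (by positivity)]
    intro i j
    rw [transferCocycle, Matrix.mul_apply, Fin.sum_univ_two]
    have h1 : ∀ k, ‖transferMatrix f g T z (n + 1) ω i k * transferCocycle f g T z ω n k j‖ ≤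
        (ε⁻¹ * (R + M) + 1) * (2 * (ε⁻¹ * (R + M) + 1)) ^ n := by
      intro k
      rw [norm_mul]
      exact mul_le_mul ((Matrix.norm_entry_le_entrywise_sup_norm _).trans (hmat n))
        ((Matrix.norm_entry_le_entrywise_sup_norm _).trans ih) (norm_nonneg _) hB
    refine (norm_add_le _ _).trans ((add_le_add (h1 0) (h1 1)).trans (le_of_eq ?_))
    ring

lemma measurable_jacPoly {Ω : Type*} [MeasurableSpace Ω] (T : Ω → Ω) (hT : Measurable T)
    (f g : Ω → ℝ) (hf : Measurable f) (hg : Measurable g) (n : ℕ) :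
    Measurable (fun p : ℝ × Ω => (jacPoly (fun n => jacobiA f T n p.2)
      (fun n => jacobiB g T n p.2) n).eval p.1) ∧
    Measurable (fun p : ℝ × Ω => (jacPoly (fun n => jacobiA f T n p.2)
      (fun n => jacobiB g T n p.2) (n + 1)).eval p.1) := by
  have ha : ∀ k, Measurable fun p : ℝ × Ω => jacobiA f T (k + 1) p.2 := fun k =>
    hf.comp ((hT.iterate (k + 1)).comp measurable_snd)
  have hb : ∀ k, Measurable fun p : ℝ × Ω => jacobiB g T k p.2 := fun k =>
    hg.comp ((hT.iterate k).comp measurable_snd)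
  induction n with
  | zero =>
    simp only [jacPoly, Polynomial.eval_sub, Polynomial.eval_one, Polynomial.eval_X,
      Polynomial.eval_C]
    exact ⟨measurable_const, measurable_fst.sub (hb 1)⟩
  | succ n ih =>
    refine ⟨ih.2, ?_⟩
    simp only [jacPoly, Polynomial.eval_sub, Polynomial.eval_mul, Polynomial.eval_X,
      Polynomial.eval_C]
    exact ((measurable_fst.sub (hb _)).mul ih.2).sub (((ha n).pow_const 2).mul ih.1)

/-- Let `(Ω, μ)` be a probability space, `T : Ω → Ω` an ergodic
measure-preserving transformation, and `{J_ω}` the associated ergodic family of Jacobi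
operators with almost-sure spectrum `Σ`, Lyapunov exponent `L`, and
`A = lim_{n→∞} (a_1(ω)⋯a_n(ω))^{1/n}` for `μ`-a.e. `ω`. Then the Lebesgue measure of the
spectrum satisfies `|Σ| ≤ 4·A·exp (sup_{E ∈ Σ} |L E|)`. -/
theorem volume_spectrum_le {Ω : Type*} [MeasurableSpace Ω] (μ : Measure Ω)
    [IsProbabilityMeasure μ] (T : Ω → Ω) (hT : Ergodic T μ)
    (f g : Ω → ℝ) (hf : Measurable f) (hg : Measurable g)
    (ε : ℝ) (hε : 0 < ε) (hfε : ∀ ω, ε ≤ f ω)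
    (M : ℝ) (hfM : ∀ ω, |f ω| ≤ M) (hgM : ∀ ω, |g ω| ≤ M)
    (J : Ω → ellTwo →L[ℂ] ellTwo) (hsa : ∀ ω, IsSelfAdjoint (J ω))
    (hJ : ∀ ω, IsJacobiOp (fun n => jacobiA f T n ω) (fun n => jacobiB g T n ω) (J ω))
    (S : Set ℝ) (hSc : IsCompact S)
    (hS : ∀ᵐ ω ∂μ, spectrum ℝ (J ω) = S)
    (L : ℂ → ℝ) (hLnn : ∀ z, 0 ≤ L z)
    (hL : ∀ z : ℂ, ∀ᵐ ω ∂μ,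
      Tendsto (fun n : ℕ => Real.log ‖transferCocycle f g T z ω n‖ / n) atTop (nhds (L z)))
    (A : ℝ) (hA : 0 < A)
    (hAlim : ∀ᵐ ω ∂μ,
      Tendsto (fun n : ℕ => (∏ i ∈ Finset.Icc 1 n, jacobiA f T i ω) ^ ((n : ℝ)⁻¹)) atTop
        (nhds A)) :
    volume S ≤ ENNReal.ofReal (4 * A * Real.exp (sSup ((fun E : ℝ => |L (E : ℂ)|) '' S))) := by
  set l := sSup ((fun E : ℝ => |L (E : ℂ)|) '' S) with hl
  have hfpos : ∀ ω, 0 < f ω := fun ω => hε.trans_le (hfε ω)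
  have hTm : Measurable T := hT.measurable
  have : (ae μ).NeBot := inferInstance
  -- boundedness of the Lyapunov exponent on `S`
  have hbdd : BddAbove ((fun E : ℝ => |L (E : ℂ)|) '' S) := by
    obtain ⟨R, hR⟩ := hSc.isBounded.exists_norm_le
    set B := 2 * (ε⁻¹ * (max R 0 + M) + 1) with hB
    obtain ⟨ω₀⟩ : Nonempty Ω := μ.nonempty_of_neZero
    have hM : 0 ≤ M := (abs_nonneg _).trans (hfM ω₀)
    have hB1 : 1 ≤ B := by
      have : 0 ≤ ε⁻¹ * (max R 0 + M) := by positivity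
      linarith
    refine ⟨Real.log B, ?_⟩
    rintro _ ⟨E, hE, rfl⟩
    obtain ⟨ω, hω⟩ := (hL (E : ℂ)).exists
    simp only [abs_of_nonneg (hLnn _)]
    refine le_of_tendsto hω (Eventually.of_forall fun n => ?_)
    have hn := cocycle_norm_le f g T ω ε M (max R 0) hε hfε hfM hgM (E : ℂ)
      (by rw [Complex.norm_real]; exact (hR E hE).trans (le_max_left _ _)) n
    rw [← hB] at hn
    have hlogB : 0 ≤ Real.log B := Real.log_nonneg hB1
    refine div_le_of_le_mul₀ (by positivity) hlogB ?_
    rcases (norm_nonneg (transferCocycle f g T (E : ℂ) ω n)).eq_or_lt with h0 | h0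
    · rw [← h0, Real.log_zero]; positivity
    · calc Real.log _ ≤ Real.log (B ^ n) := Real.log_le_log h0 hn
        _ = Real.log B * n := by rw [Real.log_pow]; ring
  have hLl : ∀ E ∈ S, L (E : ℂ) ≤ l := fun E hE =>
    (le_abs_self _).trans (le_csSup hbdd ⟨E, hE, rfl⟩)
  have main : ∀ δ : ℝ, 0 < δ →
      volume S ≤ ENNReal.ofReal (4 * (A * Real.exp δ * Real.exp (l + δ))) := by
    intro δ hδ
    set c := A * Real.exp δ * Real.exp (l + δ) with hc
    have hc0 : 0 < c := by positivity
    let P : ℕ → Ω → Polynomial ℝ := fun n ω =>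
      jacPoly (fun n => jacobiA f T n ω) (fun n => jacobiB g T n ω) n
    have hPm : ∀ n, Measurable fun p : ℝ × Ω => (P n p.2).eval p.1 := fun n =>
      (measurable_jacPoly T hTm f g hf hg n).1
    have hev : ∀ E ∈ S, ∀ᵐ ω ∂μ, ∃ N, ∀ n ≥ N, |(P n ω).eval E| ≤ c ^ n := by
      intro E hE
      filter_upwards [hL (E : ℂ), hAlim] with ω h1 h2
      have e1 := h1.eventually_lt_const (show L (E : ℂ) < l + δ by linarith [hLl E hE])
      have e2 := h2.eventually_lt_const (show A < A * Real.exp δ by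
        have : 1 < Real.exp δ := Real.one_lt_exp_iff.mpr hδ
        nlinarith)
      have e3 := e1.and (e2.and (eventually_ge_atTop 1))
      obtain ⟨N, hN⟩ := eventually_atTop.mp e3
      refine ⟨N, fun n hn => ?_⟩
      obtain ⟨q1, q2, q3⟩ := hN n hn
      have hn0 : (0 : ℝ) < n := by exact_mod_cast q3
      have hapos : 0 < ∏ i ∈ Finset.Icc 1 n, jacobiA f T i ω := by
        refine Finset.prod_pos fun i hi => ?_
        obtain ⟨k, rfl⟩ : ∃ k, i = k + 1 := ⟨i - 1, by have := (Finset.mem_Icc.mp hi).1; omega⟩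
        exact hfpos _
      have r1 : ‖transferCocycle f g T (E : ℂ) ω n‖ ≤ Real.exp (l + δ) ^ n := by
        rw [div_lt_iff₀ hn0] at q1
        rw [← Real.exp_nat_mul]
        refine (Real.le_exp_log _).trans (Real.exp_le_exp.mpr ?_)
        linarith
      have r2 : ∏ i ∈ Finset.Icc 1 n, jacobiA f T i ω ≤ (A * Real.exp δ) ^ n := by
        have := pow_le_pow_left₀ (Real.rpow_nonneg hapos.le _) q2.le n
        rwa [Real.rpow_inv_natCast_pow hapos.le (by omega)] at this
      have r3 := (cocycle_entry f g T ω hfpos E n).1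
      have r4 := (Matrix.norm_entry_le_entrywise_sup_norm
        (transferCocycle f g T (E : ℂ) ω n) (i := 0) (j := 0)).trans r1
      rw [r3, Complex.norm_real, Real.norm_eq_abs, abs_div, abs_of_pos hapos,
        div_le_iff₀ hapos] at r4
      calc |(P n ω).eval E| ≤ Real.exp (l + δ) ^ n * ∏ i ∈ Finset.Icc 1 n, jacobiA f T i ω := r4
        _ ≤ Real.exp (l + δ) ^ n * (A * Real.exp δ) ^ n := by gcongr
        _ = c ^ n := by rw [hc, ← mul_pow]; ring
    have hmeas : MeasurableSet {x : ℝ × Ω | ∃ N, ∀ n ≥ N, |(P n x.2).eval x.1| ≤ c ^ n} := by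
      simp only [Set.setOf_exists, Set.setOf_forall]
      refine MeasurableSet.iUnion fun N => MeasurableSet.iInter fun n =>
        MeasurableSet.iInter fun _ => ?_
      exact measurableSet_le (hPm n).abs measurable_const
    have hae : ∀ᵐ E ∂(volume.restrict S), ∀ᵐ ω ∂μ, ∃ N, ∀ n ≥ N, |(P n ω).eval E| ≤ c ^ n :=
      (ae_restrict_iff' hSc.measurableSet).mpr (Eventually.of_forall hev)
    rw [Measure.ae_ae_comm hmeas] at hae
    obtain ⟨ω, hω⟩ := hae.exists
    rw [ae_restrict_iff' hSc.measurableSet] at hω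
    let D : ℕ → Set ℝ := fun N => S ∩ {E | ∀ n ≥ N, |(P n ω).eval E| ≤ c ^ n}
    have hDmono : Monotone D := fun N N' h E hE => ⟨hE.1, fun n hn => hE.2 n (h.trans hn)⟩
    have hle : volume S ≤ volume (⋃ N, D N) := by
      refine measure_mono_ae ?_
      filter_upwards [hω] with E hE hES
      obtain ⟨N, hN⟩ := hE hES
      exact Set.mem_iUnion.mpr ⟨N, hES, hN⟩
    refine hle.trans ?_
    rw [hDmono.measure_iUnion]
    refine iSup_le fun N => ?_
    let K : Set ℝ := S ∩ {E | |(P (N + 1) ω).eval E| ≤ c ^ (N + 1)}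
    have hK : IsCompact K := by
      refine hSc.inter_right (isClosed_le ?_ continuous_const)
      exact (P (N + 1) ω).continuous.abs
    have hDK : D N ⊆ K := fun E hE => ⟨hE.1, hE.2 (N + 1) (by omega)⟩
    have hmon := (jacPoly_monic (fun n => jacobiA f T n ω) (fun n => jacobiB g T n ω) (N + 1)).1
    have hpol := polya_ineq K hK (P (N + 1) ω) hmon.1 (N + 1) hmon.2 (by omega) c hc0.le
      fun x hx => hx.2
    refine (measure_mono hDK).trans ?_
    rw [← ENNReal.ofReal_toReal hK.measure_lt_top.ne]
    exact ENNReal.ofReal_le_ofReal hpol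
  have hcont : Continuous fun δ : ℝ =>
      ENNReal.ofReal (4 * (A * Real.exp δ * Real.exp (l + δ))) := by
    refine ENNReal.continuous_ofReal.comp ?_
    fun_prop
  have hlim := (hcont.tendsto 0).mono_left (nhdsWithin_le_nhds (s := Set.Ioi 0))
  have hfinal := ge_of_tendsto hlim (by
    filter_upwards [self_mem_nhdsWithin] with δ hδ
    exact main δ hδ)
  have he : 4 * (A * Real.exp 0 * Real.exp (l + 0)) = 4 * A * Real.exp l := by
    rw [Real.exp_zero, add_zero]; ring
  rw [he] at hfinal
  exact hfinal
end
end

section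
/- Let K ⊂ ℝ be a nonempty compact set. Then Cap(K) ≤ (max K − min K)/4, where Cap denotes logarithmic capacity. -/
open MeasureTheory
open scoped ENNReal NNReal

/-- The logarithmic energy `I(ν) ∈ (-∞, ∞]` of a measure `ν` on `ℝ`:
`I(ν) = ∬ log(1/|x - y|) dν(y) dν(x)`, realized as the monotone limit (supremum) of the
integrals of the kernel `(x, y) ↦ log (1/|x - y|)` truncated above at level `t`
(the kernel takes the value `+∞` on the diagonal, which is truncated to `t`). -/
noncomputable def logEnergy (ν : Measure ℝ) : EReal :=
  ⨆ t : ℝ, ((∫ x, ∫ y, (if x = y then t else min (Real.log (1 / |x - y|)) t) ∂ν ∂ν : ℝ) : EReal)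

/-- The logarithmic capacity of a set `E ⊆ ℝ`:
`Cap(E) = sup { exp (-I(ν)) : ν a Borel probability measure with compact support ⊆ E }`. -/
noncomputable def logCap (E : Set ℝ) : ℝ≥0∞ :=
  ⨆ ν ∈ {ν : Measure ℝ | IsProbabilityMeasure ν ∧ ∃ K, IsCompact K ∧ K ⊆ E ∧ ν Kᶜ = 0},
    EReal.exp (-(logEnergy ν))


namespace LogCapAux

/-- The squared modulus of `1 - r e^{iα}`. -/
noncomputable def D (r α : ℝ) : ℝ := 1 - 2 * r * Real.cos α + r ^ 2

lemma D_ge (r α : ℝ) (hr : 0 < r) : (1 - r) ^ 2 ≤ D r α := by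
  unfold D; nlinarith [Real.cos_le_one α]

lemma D_ge' (r α : ℝ) : 2 * r * (1 - Real.cos α) ≤ D r α := by
  unfold D; nlinarith [sq_nonneg (1 - r)]

lemma D_pos (r α : ℝ) (hr : 0 < r) (hr1 : r < 1) : 0 < D r α :=
  lt_of_lt_of_le (by have : 0 < 1 - r := by linarith
                     positivity) (D_ge r α hr)

lemma hasSum_D (r α : ℝ) (hr : 0 < r) (hr1 : r < 1) :
    HasSum (fun n : ℕ => r ^ n / n * Real.cos (n * α)) (-(Real.log (D r α) / 2)) := by
  set u : ℂ := r * Complex.exp (α * Complex.I) with hu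
  have hn : ‖u‖ = r := by
    rw [hu, norm_mul, Complex.norm_exp_ofReal_mul_I]; simp [abs_of_pos hr]
  have h := Complex.hasSum_re (Complex.hasSum_taylorSeries_neg_log (z := u) (by rw [hn]; exact hr1))
  have e1 : (fun n : ℕ => (u ^ n / n).re) = fun n : ℕ => r ^ n / n * Real.cos (n * α) := by
    funext n
    have : u ^ n / n = ((r ^ n / n : ℝ) : ℂ) * Complex.exp (((n * α : ℝ) : ℂ) * Complex.I) := by
      rw [hu, mul_pow, ← Complex.exp_nat_mul]
      push_cast
      rw [mul_assoc]; ring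
    rw [this, Complex.re_ofReal_mul, Complex.exp_ofReal_mul_I_re]
  have e2 : (-Complex.log (1 - u)).re = -(Real.log (D r α) / 2) := by
    have hD : D r α = ‖1 - u‖ ^ 2 := by
      rw [← Complex.normSq_eq_norm_sq, Complex.normSq_apply]
      have h1 : (1 - u).re = 1 - r * Real.cos α := by
        simp only [hu, Complex.sub_re, Complex.one_re, Complex.re_ofReal_mul,
          Complex.exp_ofReal_mul_I_re]
      have h2 : (1 - u).im = - (r * Real.sin α) := by
        simp only [hu, Complex.sub_im, Complex.one_im, Complex.im_ofReal_mul,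
          Complex.exp_ofReal_mul_I_im]; ring
      rw [h1, h2]; unfold D
      nlinarith [Real.sin_sq_add_cos_sq α]
    rw [Complex.neg_re, Complex.log_re, hD, Real.log_pow]; push_cast; ring
  rw [e1, e2] at h
  exact h

/-- The Abel-regularized kernel. -/
noncomputable def G (r θ φ : ℝ) : ℝ :=
  -(Real.log (D r (θ + φ)) / 2) + -(Real.log (D r (θ - φ)) / 2)

lemma hasSum_G (r θ φ : ℝ) (hr : 0 < r) (hr1 : r < 1) :
    HasSum (fun n : ℕ => 2 * (r ^ n / n) * (Real.cos (n * θ) * Real.cos (n * φ))) (G r θ φ) := by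
  have h := (hasSum_D r (θ + φ) hr hr1).add (hasSum_D r (θ - φ) hr hr1)
  unfold G
  convert h using 2 with n
  rw [mul_add, mul_sub, Real.cos_add, Real.cos_sub]; ring

lemma coef_bound (r : ℝ) (hr : 0 < r) (n : ℕ) (s t : ℝ) :
    ‖2 * (r ^ n / n) * (Real.cos s * Real.cos t)‖ ≤ 2 * r ^ n := by
  have h1 : |Real.cos s * Real.cos t| ≤ 1 := by
    rw [abs_mul]; exact mul_le_one₀ (Real.abs_cos_le_one s) (abs_nonneg _) (Real.abs_cos_le_one t)
  have h2 : r ^ n / n ≤ r ^ n := by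
    rcases Nat.eq_zero_or_pos n with h | h
    · subst h; simp
    · exact div_le_self (by positivity) (by exact_mod_cast h)
  have h3 : 0 ≤ r ^ n / n := by positivity
  rw [Real.norm_eq_abs, abs_mul, abs_of_nonneg (by positivity : 0 ≤ 2 * (r ^ n / n))]
  nlinarith [abs_nonneg (Real.cos s * Real.cos t)]

lemma summable_coef (r : ℝ) (hr : 0 < r) (hr1 : r < 1) : Summable (fun n : ℕ => 2 * r ^ n) :=
  (summable_geometric_of_lt_one hr.le hr1).mul_left 2

lemma norm_G_le (r θ φ : ℝ) (hr : 0 < r) (hr1 : r < 1) : ‖G r θ φ‖ ≤ ∑' n : ℕ, 2 * r ^ n := by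
  rw [← (hasSum_G r θ φ hr hr1).tsum_eq]
  exact tsum_of_norm_bounded (summable_coef r hr hr1).hasSum (fun n => coef_bound r hr n _ _)

lemma G_eq (r θ φ : ℝ) (hr : 0 < r) (hr1 : r < 1) :
    G r θ φ = - (Real.log (D r (θ + φ) * D r (θ - φ)) / 2) := by
  rw [Real.log_mul (D_pos _ _ hr hr1).ne' (D_pos _ _ hr hr1).ne']; unfold G; ring

lemma G_le (r θ φ : ℝ) (hr : 0 < r) (hr1 : r < 1) : G r θ φ ≤ -2 * Real.log (1 - r) := by
  have h : ∀ α, 2 * Real.log (1 - r) ≤ Real.log (D r α) := by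
    intro α
    have h0 : 0 < 1 - r := by linarith
    have := Real.log_le_log (by positivity) (D_ge r α hr)
    rw [Real.log_pow] at this
    exact_mod_cast this
  have h1 := h (θ + φ)
  have h2 := h (θ - φ)
  unfold G; linarith

lemma G_le' (r θ φ : ℝ) (hr : 0 < r) (hr1 : r < 1) (hne : Real.cos θ ≠ Real.cos φ) :
    G r θ φ ≤ - Real.log (2 * r * |Real.cos θ - Real.cos φ|) := by
  rw [G_eq r θ φ hr hr1]
  have hd : 0 < |Real.cos θ - Real.cos φ| := abs_pos.mpr (sub_ne_zero.mpr hne)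
  have hkey : (2 * r * |Real.cos θ - Real.cos φ|) ^ 2 ≤ D r (θ + φ) * D r (θ - φ) := by
    have h1 := mul_le_mul (D_ge' r (θ + φ)) (D_ge' r (θ - φ))
      (by have := Real.cos_le_one (θ - φ)
          have : 0 ≤ 1 - Real.cos (θ - φ) := by linarith
          positivity) (D_pos _ _ hr hr1).le
    refine le_trans (le_of_eq ?_) h1
    rw [mul_pow, sq_abs, Real.cos_add, Real.cos_sub]
    have hs := Real.sin_sq θ
    have ht := Real.sin_sq φ
    have : (Real.sin θ * Real.sin φ) ^ 2 = (1 - Real.cos θ ^ 2) * (1 - Real.cos φ ^ 2) := by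
      rw [mul_pow, hs, ht]
    linear_combination (-4 * r ^ 2) * (-this)
  have := Real.log_le_log (by positivity) hkey
  rw [Real.log_pow] at this
  push_cast at this
  linarith

/-- The truncated kernel. -/
noncomputable def F (t : ℝ) (p : ℝ × ℝ) : ℝ :=
  if p.1 = p.2 then t else min (Real.log (1 / |p.1 - p.2|)) t

lemma measurable_F (t : ℝ) : Measurable (F t) := by
  unfold F
  refine Measurable.ite (measurableSet_eq_fun measurable_fst measurable_snd) measurable_const ?_
  fun_prop

lemma measurable_G (r : ℝ) : Measurable (fun p : ℝ × ℝ => G r p.1 p.2) := by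
  unfold G D
  fun_prop

section
variable {ν : Measure ℝ} [IsProbabilityMeasure ν] {a b : ℝ}

lemma ae_prod_mem (h : ∀ᵐ x ∂ν, x ∈ Set.Icc a b) :
    ∀ᵐ p ∂(ν.prod ν), p.1 ∈ Set.Icc a b ∧ p.2 ∈ Set.Icc a b := by
  have h1 := (Measure.quasiMeasurePreserving_fst (μ := ν) (ν := ν)).ae h
  have h2 := (Measure.quasiMeasurePreserving_snd (μ := ν) (ν := ν)).ae h
  exact h1.and h2

lemma integrable_F (hab : a < b) (h : ∀ᵐ x ∂ν, x ∈ Set.Icc a b) (t : ℝ) :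
    Integrable (F t) (ν.prod ν) := by
  refine Integrable.of_bound (measurable_F t).aestronglyMeasurable
    (|Real.log (b - a)| + |t|) ?_
  filter_upwards [ae_prod_mem h] with p hp
  obtain ⟨⟨h1, h2⟩, h3, h4⟩ := hp
  unfold F
  rw [Real.norm_eq_abs]
  have A := neg_abs_le t
  have B := le_abs_self t
  have C := abs_nonneg (Real.log (b - a))
  have E := le_abs_self (Real.log (b - a))
  split_ifs with hpp
  · linarith
  · have hd : 0 < |p.1 - p.2| := abs_pos.mpr (sub_ne_zero.mpr hpp)
    have hle : |p.1 - p.2| ≤ b - a := by rw [abs_le]; constructor <;> linarith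
    have hl := Real.log_le_log hd hle
    rw [one_div, Real.log_inv, abs_le]
    constructor
    · apply le_min <;> linarith [abs_nonneg t]
    · exact (min_le_right _ _).trans (by linarith)

lemma integrable_G (r : ℝ) (hr : 0 < r) (hr1 : r < 1) {T : ℝ → ℝ} (hT : Measurable T) :
    Integrable (fun p : ℝ × ℝ => G r (T p.1) (T p.2)) (ν.prod ν) := by
  refine Integrable.of_bound ?_ _ (Filter.Eventually.of_forall fun p => norm_G_le r _ _ hr hr1)
  exact ((measurable_G r).comp ((hT.comp measurable_fst).prodMk
    (hT.comp measurable_snd))).aestronglyMeasurable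

lemma integral_G_nonneg (r : ℝ) (hr : 0 < r) (hr1 : r < 1) {T : ℝ → ℝ} (hT : Measurable T) :
    0 ≤ ∫ p, G r (T p.1) (T p.2) ∂(ν.prod ν) := by
  have hint : ∀ n : ℕ, Integrable (fun p : ℝ × ℝ =>
      2 * (r ^ n / n) * (Real.cos (n * T p.1) * Real.cos (n * T p.2))) (ν.prod ν) := fun n =>
    Integrable.of_bound (by
      have : Measurable (fun p : ℝ × ℝ =>
        2 * (r ^ n / n) * (Real.cos (n * T p.1) * Real.cos (n * T p.2))) := by fun_prop
      exact this.aestronglyMeasurable) (2 * r ^ n)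
      (Filter.Eventually.of_forall fun p => coef_bound r hr n _ _)
  have hs := hasSum_integral_of_summable_integral_norm hint (by
    refine Summable.of_nonneg_of_le (fun n => integral_nonneg fun p => norm_nonneg _) (fun n => ?_)
      (summable_coef r hr hr1)
    calc _ ≤ ∫ p : ℝ × ℝ, 2 * r ^ n ∂(ν.prod ν) :=
          integral_mono (hint n).norm (integrable_const _) (fun p => coef_bound r hr n _ _)
      _ = _ := by simp)
  have e : (fun p : ℝ × ℝ => ∑' n : ℕ,
      2 * (r ^ n / n) * (Real.cos (n * T p.1) * Real.cos (n * T p.2))) =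
      fun p => G r (T p.1) (T p.2) := by
    funext p; exact (hasSum_G r _ _ hr hr1).tsum_eq
  rw [e] at hs
  refine hs.nonneg fun n => ?_
  rw [integral_const_mul,
    integral_prod_mul (fun x => Real.cos (n * T x)) (fun x => Real.cos (n * T x))]
  exact mul_nonneg (by positivity) (mul_self_nonneg _)

lemma energy_ge (hab : a < b) (h : ∀ᵐ x ∂ν, x ∈ Set.Icc a b) (r : ℝ) (hr : 0 < r) (hr1 : r < 1) :
    ((Real.log (4 / (b - a)) + Real.log r : ℝ) : EReal) ≤ logEnergy ν := by
  set L := Real.log (4 / (b - a)) with hL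
  set t := L - 2 * Real.log (1 - r) with ht
  refine le_trans ?_ (le_iSup _ t)
  rw [EReal.coe_le_coe_iff]
  have e : ∫ x, ∫ y, (if x = y then t else min (Real.log (1 / |x - y|)) t) ∂ν ∂ν =
      ∫ p, F t p ∂(ν.prod ν) := (integral_prod (F t) (integrable_F hab h t)).symm
  rw [e]
  have hba : 0 < b - a := by linarith
  set T : ℝ → ℝ := fun x => Real.arccos ((x - (a + b) / 2) / ((b - a) / 2)) with hTdef
  have hT : Measurable T := by
    have := Real.continuous_arccos
    exact (this.comp (by fun_prop)).measurable
  have hcos : ∀ x ∈ Set.Icc a b, Real.cos (T x) = (x - (a + b) / 2) / ((b - a) / 2) := by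
    intro x hx
    apply Real.cos_arccos
    · rw [le_div_iff₀ (by linarith)]; linarith [hx.1]
    · rw [div_le_iff₀ (by linarith)]; linarith [hx.2]
  have hlr : Real.log r ≤ 0 := Real.log_nonpos hr.le hr1.le
  have hmono : ∫ p, (G r (T p.1) (T p.2) + (L + Real.log r)) ∂(ν.prod ν) ≤
      ∫ p, F t p ∂(ν.prod ν) := by
    refine integral_mono_ae ((integrable_G r hr hr1 hT).add (integrable_const _))
      (integrable_F hab h t) ?_
    filter_upwards [ae_prod_mem h] with p hp
    have hG := G_le r (T p.1) (T p.2) hr hr1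
    have hGt : G r (T p.1) (T p.2) + (L + Real.log r) ≤ t := by rw [ht]; linarith
    unfold F
    split_ifs with hpp
    · exact hGt
    · refine le_min ?_ hGt
      have hsub : Real.cos (T p.1) - Real.cos (T p.2) = (p.1 - p.2) / ((b - a) / 2) := by
        rw [hcos _ hp.1, hcos _ hp.2]; ring
      have hd : p.1 - p.2 ≠ 0 := sub_ne_zero.mpr hpp
      have hne : Real.cos (T p.1) ≠ Real.cos (T p.2) := by
        rw [← sub_ne_zero, hsub]; exact div_ne_zero hd (by linarith)
      have h' := G_le' r _ _ hr hr1 hne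
      have e2 : 2 * r * |Real.cos (T p.1) - Real.cos (T p.2)| =
          (4 / (b - a)) * r * |p.1 - p.2| := by
        rw [hsub, abs_div, abs_of_pos (by linarith : 0 < (b - a) / 2)]
        field_simp; norm_num
      have h4 : (4 / (b - a)) ≠ 0 := by positivity
      rw [e2, Real.log_mul (mul_ne_zero h4 hr.ne') (abs_ne_zero.mpr hd),
        Real.log_mul h4 hr.ne'] at h'
      rw [one_div, Real.log_inv]
      linarith
  rw [integral_add (integrable_G r hr hr1 hT) (integrable_const _)] at hmono
  have := integral_G_nonneg (ν := ν) r hr hr1 hT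
  simp only [integral_const, probReal_univ, one_smul] at hmono
  linarith

lemma energy_ge' (hab : a < b) (h : ∀ᵐ x ∂ν, x ∈ Set.Icc a b) :
    ((Real.log (4 / (b - a)) : ℝ) : EReal) ≤ logEnergy ν := by
  have hc : Filter.Tendsto (fun r : ℝ => ((Real.log (4 / (b - a)) + Real.log r : ℝ) : EReal))
      (nhdsWithin 1 (Set.Iio 1)) (nhds ((Real.log (4 / (b - a)) : ℝ) : EReal)) := by
    refine (continuous_coe_real_ereal.tendsto _).comp ?_
    have : Filter.Tendsto (fun r : ℝ => Real.log (4 / (b - a)) + Real.log r) (nhds 1)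
        (nhds (Real.log (4 / (b - a)) + Real.log 1)) :=
      (Real.continuousAt_log one_ne_zero).tendsto.const_add _
    rw [Real.log_one, add_zero] at this
    exact this.mono_left nhdsWithin_le_nhds
  refine le_of_tendsto hc ?_
  filter_upwards [Ioo_mem_nhdsLT (zero_lt_one' ℝ)] with r hr
  exact energy_ge hab h r hr.1 hr.2

lemma energy_top (h : ∀ᵐ x ∂ν, x = a) : logEnergy ν = ⊤ := by
  rw [EReal.eq_top_iff_forall_lt]
  intro y
  refine lt_of_lt_of_le ?_ (le_iSup _ (y + 1))
  rw [EReal.coe_lt_coe_iff]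
  have : ∫ x, ∫ z, (if x = z then y + 1 else min (Real.log (1 / |x - z|)) (y + 1)) ∂ν ∂ν =
      ∫ _x, (y + 1) ∂ν := by
    refine integral_congr_ae ?_
    filter_upwards [h] with x hx
    have : ∫ z, (if x = z then y + 1 else min (Real.log (1 / |x - z|)) (y + 1)) ∂ν =
        ∫ _z, (y + 1) ∂ν := by
      refine integral_congr_ae ?_
      filter_upwards [h] with z hz
      simp [hx, hz]
    rw [this]; simp
  rw [this]; simp

end

end LogCapAux

/-- For a nonempty compact set `K ⊆ ℝ`,
`Cap(K) ≤ (max K - min K) / 4`. -/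
theorem logCap_le_diam_div_four (K : Set ℝ) (hKne : K.Nonempty) (hKc : IsCompact K) :
    logCap K ≤ ENNReal.ofReal ((sSup K - sInf K) / 4) := by
  unfold logCap
  refine iSup₂_le fun ν hν => ?_
  obtain ⟨hp, K', -, hK', h0⟩ := hν
  have hmem : ∀ᵐ x ∂ν, x ∈ Set.Icc (sInf K) (sSup K) := by
    have : ∀ᵐ x ∂ν, x ∈ K' := h0
    filter_upwards [this] with x hx
    exact ⟨csInf_le hKc.bddBelow (hK' hx), le_csSup hKc.bddAbove (hK' hx)⟩
  rcases (csInf_le_csSup hKne hKc.bddBelow hKc.bddAbove).lt_or_eq with hlt | heq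
  · have h := LogCapAux.energy_ge' hlt hmem
    have h2 : -(logEnergy ν) ≤ ((-Real.log (4 / (sSup K - sInf K)) : ℝ) : EReal) := by
      rw [EReal.coe_neg]; exact EReal.neg_le_neg_iff.mpr h
    refine (EReal.exp_monotone h2).trans ?_
    rw [EReal.exp_coe, ← Real.log_inv, Real.exp_log (by
      have : 0 < sSup K - sInf K := by linarith
      positivity), inv_div]
  · have : logEnergy ν = ⊤ := LogCapAux.energy_top (a := sInf K) (by
      filter_upwards [hmem] with x hx
      rw [← heq] at hx
      exact le_antisymm hx.2 hx.1)
    rw [this]; simp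
end
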